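/- Suppose (x_n, y_n) is a positive solution of the system such that for some n₀ ≥ 0 one has x_{n₀-1} < α+1, x_{n₀} < α+1, x_{n₀+1} ≥ α+1, y_{n₀-1} < α+1, y_{n₀} < α+1, and y_{n₀+1} ≥ α+1. Then x_{n₀+2} > α+1, x_{n₀+3} > α+1, y_{n₀+2} > α+1, and y_{n₀+3} > α+1; i.e., the positive semi-cycle beginning at index n₀+1 has at least three terms. -/

import Mathlib

/-!
A term exceeds the equilibrium `α + 1` as soon as the ratio that produces it exceeds `1`, that is,
as soon as the other component has increased over the preceding two steps. A component that climbs
from below the equilibrium to above it has increased in this way, so each crossing in one component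
forces a term above the equilibrium in the other, and that term is itself the top of a new climb.
-/

theorem add_one_lt_add_rpow_div_rpow {α r a b : ℝ} (hr : 0 < r) (ha : 0 < a) (hab : a < b) :
    α + 1 < α + b ^ r / a ^ r := by
  have one_lt_ratio : 1 < b ^ r / a ^ r :=
    (one_lt_div (Real.rpow_pos_of_pos ha r)).2 (Real.rpow_lt_rpow ha.le hab hr)
  gcongr

/-- `(x, y)` is a positive solution of the system with parameters `α`, `p`, `q`. The sequences are
indexed by `ℤ` so that the initial indices `-2`, `-1`, `0` keep their names; values at indices
below `-2` are unconstrained. -/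
structure IsPositiveSolution (α p q : ℝ) (x y : ℤ → ℝ) : Prop where
  x_pos : ∀ n : ℤ, -2 ≤ n → 0 < x n
  y_pos : ∀ n : ℤ, -2 ≤ n → 0 < y n
  x_succ : ∀ n : ℤ, 0 ≤ n → x (n + 1) = α + y n ^ p / y (n - 2) ^ p
  y_succ : ∀ n : ℤ, 0 ≤ n → y (n + 1) = α + x n ^ q / x (n - 2) ^ q

namespace IsPositiveSolution

variable {α p q : ℝ} {x y : ℤ → ℝ} {n : ℤ}

theorem symm (h : IsPositiveSolution α p q x y) : IsPositiveSolution α q p y x :=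
  ⟨h.y_pos, h.x_pos, h.y_succ, h.x_succ⟩

theorem add_one_lt_x_succ (h : IsPositiveSolution α p q x y) (hp : 0 < p) (hn : 0 ≤ n)
    (hy : y (n - 2) < y n) : α + 1 < x (n + 1) := by
  rw [h.x_succ n hn]
  exact add_one_lt_add_rpow_div_rpow hp (h.y_pos _ (by lia)) hy

theorem add_one_lt_x_add_two (h : IsPositiveSolution α p q x y) (hp : 0 < p) (hn : -1 ≤ n)
    (hy : y (n - 1) < y (n + 1)) : α + 1 < x (n + 2) := by
  have hy' : y (n + 1 - 2) < y (n + 1) := by rwa [show n + 1 - 2 = n - 1 by ring]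
  rw [show n + 2 = n + 1 + 1 by ring]
  exact h.add_one_lt_x_succ hp (by lia) hy'

theorem add_one_lt_x_add_three (h : IsPositiveSolution α p q x y) (hp : 0 < p) (hq : 0 < q)
    (hn : -1 ≤ n) (hx : x (n - 1) < x (n + 1)) (hy : y n ≤ α + 1) : α + 1 < x (n + 3) := by
  have y_climbs : y (n + 2 - 2) < y (n + 2) := by
    rw [add_sub_cancel_right]
    exact hy.trans_lt (h.symm.add_one_lt_x_add_two hq hn hx)
  rw [show n + 3 = n + 2 + 1 by ring]
  exact h.add_one_lt_x_succ hp (by lia) y_climbs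

end IsPositiveSolution

theorem positive_semicycle_three_terms_general {α p q : ℝ} {x y : ℤ → ℝ} {n₀ : ℤ}
    (h : IsPositiveSolution α p q x y) (hp : 0 < p) (hq : 0 < q) (hn₀ : -1 ≤ n₀)
    (hx_climb : x (n₀ - 1) < x (n₀ + 1)) (hx : x n₀ ≤ α + 1)
    (hy_climb : y (n₀ - 1) < y (n₀ + 1)) (hy : y n₀ ≤ α + 1) :
    α + 1 < x (n₀ + 2) ∧ α + 1 < x (n₀ + 3) ∧
      α + 1 < y (n₀ + 2) ∧ α + 1 < y (n₀ + 3) :=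
  ⟨h.add_one_lt_x_add_two hp hn₀ hy_climb,
    h.add_one_lt_x_add_three hp hq hn₀ hx_climb hy,
    h.symm.add_one_lt_x_add_two hq hn₀ hx_climb,
    h.symm.add_one_lt_x_add_three hq hp hn₀ hy_climb hx⟩

theorem positive_semicycle_three_terms (α p q : ℝ) (hα : 0 < α) (hp : 0 < p) (hq : 0 < q)
    (x y : ℤ → ℝ)
    (hx0 : ∀ n : ℤ, -2 ≤ n → 0 < x n) (hy0 : ∀ n : ℤ, -2 ≤ n → 0 < y n)
    (hx : ∀ n : ℤ, 0 ≤ n → x (n + 1) = α + y n ^ p / y (n - 2) ^ p)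
    (hy : ∀ n : ℤ, 0 ≤ n → y (n + 1) = α + x n ^ q / x (n - 2) ^ q)
    (n₀ : ℤ) (hn₀ : 0 ≤ n₀)
    (h1 : x (n₀ - 1) < α + 1) (h2 : x n₀ < α + 1) (h3 : α + 1 ≤ x (n₀ + 1))
    (h4 : y (n₀ - 1) < α + 1) (h5 : y n₀ < α + 1) (h6 : α + 1 ≤ y (n₀ + 1)) :
    α + 1 < x (n₀ + 2) ∧ α + 1 < x (n₀ + 3) ∧
      α + 1 < y (n₀ + 2) ∧ α + 1 < y (n₀ + 3) :=
  positive_semicycle_three_terms_general ⟨hx0, hy0, hx, hy⟩ hp hq (by lia)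
    (h1.trans_le h3) h2.le (h4.trans_le h6) h5.le
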